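/- arXiv:2303.17794 — 3 statements merged into one kernel-verified Lean document; each statement's English description precedes it below -/
import Mathlib

section
/- Let n ≥ 1 and let K ⊂ ℝⁿ be a convex body containing the origin in its interior which is a local minimizer of the volume product: there exists ε > 0 such that vp(K) ≤ vp(L) for every convex body L ⊂ ℝⁿ containing the origin in its interior with Hausdorff distance d_H(K, L) < ε. Assume moreover that the barycenters of K and of K° are at the origin (which holds automatically for local minimizers). Then the symmetric matrix cov(K°) − (n+2)⁻² · cov(K)⁻¹ is positive semidefinite. -/
open MeasureTheory RealInnerProductSpace

noncomputable section

/-- The polar body `K° = {y | ⟨x, y⟩ ≤ 1 for all x ∈ K}`. -/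
def polarBody {n : ℕ} (K : Set (EuclideanSpace ℝ (Fin n))) : Set (EuclideanSpace ℝ (Fin n)) :=
  {y | ∀ x ∈ K, ⟪x, y⟫ ≤ 1}

/-- The volume product `vp(K) = |K| · |K°|`. -/
def vp {n : ℕ} (K : Set (EuclideanSpace ℝ (Fin n))) : ℝ :=
  (volume K).toReal * (volume (polarBody K)).toReal

/-- The barycenter `G_A = |A|⁻¹ ∫_A x dx`. -/
def bary {n : ℕ} (A : Set (EuclideanSpace ℝ (Fin n))) : EuclideanSpace ℝ (Fin n) :=
  (volume A).toReal⁻¹ • ∫ x in A, x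

/-- The covariance matrix `cov(K)_{ij} = |K|⁻¹ ∫_K x_i x_j dx`. -/
def covM {n : ℕ} (K : Set (EuclideanSpace ℝ (Fin n))) : Matrix (Fin n) (Fin n) ℝ :=
  Matrix.of fun i j => (volume K).toReal⁻¹ * ∫ x in K, x i * x j

/-!
Apply to `K` the fractional linear map `x ↦ x / (1 + ⟪x, v⟫)` and then the translation by `w`.
Polarity turns each of these operations into the other, so `K°` is translated by `v` and then mapped
by `y ↦ y / (1 + ⟪y, w⟫)`, and both volumes are explicit integrals over the fixed bodies `K` and
`K°`. Along `(t v, t w)` the first-order terms of the volume product vanish because the barycenters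
do, and the second-order term at a minimizer gives
`2 ⟪v, w⟫ ≤ (n + 2) (⟪v, cov(K) v⟫ + ⟪w, cov(K°) w⟫)`. Optimizing over `v`, that is, taking
`v = (n + 2)⁻¹ cov(K)⁻¹ w`, gives the claim.
-/

open Asymptotics Filter Set
open scoped Topology Matrix

section Expansion

theorem isBigO_inv_one_add_pow_sub_taylor (m : ℕ) :
    (fun u : ℝ => ((1 + u) ^ m)⁻¹ - (1 - m * u + m * (m + 1) / 2 * u ^ 2)) =O[𝓝 0]
      fun u => u ^ 3 := by
  induction m with
  | zero => simpa using isBigO_zero _ _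
  | succ m ih =>
    have hinv : (fun u : ℝ => (1 + u)⁻¹) =O[𝓝 0] fun _ => (1 : ℝ) :=
      (ContinuousAt.tendsto (by fun_prop (disch := simp))).isBigO_one ℝ
    have hcubic : (fun u : ℝ => (m + 1) * (m + 2) / 2 * u ^ 3) =O[𝓝 0] fun u => u ^ 3 :=
      isBigO_const_mul_self _ _ _
    refine (hinv.mul (ih.sub hcubic)).congr' ?_ (by simp)
    filter_upwards [eventually_ne_nhds (show (0 : ℝ) ≠ -1 by norm_num)] with u hu
    have hu' : 1 + u ≠ 0 := fun h => hu (by linarith)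
    push_cast
    field_simp
    ring

variable {X : Type*} {S : Set X} {p : X → ℝ}

theorem isBigO_inv_one_add_pow_sub_quadratic (hp : p =O[𝓟 S] fun _ => (1 : ℝ)) (q : ℝ) (m : ℕ) :
    (fun z : X × ℝ => ((1 + (z.2 * p z.1 + z.2 ^ 2 * q)) ^ m)⁻¹ -
      (1 - m * q * z.2 ^ 2 + -(m * z.2) * p z.1 + m * (m + 1) / 2 * z.2 ^ 2 * p z.1 ^ 2))
      =O[𝓟 S ×ˢ 𝓝 0] fun z => z.2 ^ 3 := by
  have ht : Tendsto (fun z : X × ℝ => z.2) (𝓟 S ×ˢ 𝓝 0) (𝓝 0) := tendsto_snd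
  have hp' : (fun z : X × ℝ => p z.1) =O[𝓟 S ×ˢ 𝓝 0] fun _ => (1 : ℝ) :=
    hp.comp_tendsto tendsto_fst
  have htq (c : ℝ) : (fun z : X × ℝ => z.2 * c) =O[𝓟 S ×ˢ 𝓝 0] fun _ => (1 : ℝ) :=
    (ht.mul_const c).isBigO_one ℝ
  have hu : (fun z : X × ℝ => z.2 * p z.1 + z.2 ^ 2 * q) =O[𝓟 S ×ˢ 𝓝 0] fun z => z.2 :=
    ((isBigO_refl (fun z : X × ℝ => z.2) _).mul (hp'.add (htq q))).congr
      (fun z => by ring) (fun z => mul_one _)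
  have htaylor := ((isBigO_inv_one_add_pow_sub_taylor m).comp_tendsto
    (hu.trans_tendsto ht)).trans (hu.pow 3)
  have hsquare : (fun z : X × ℝ =>
      z.2 ^ 3 * (m * (m + 1) / 2 * (2 * q * p z.1 + z.2 * q ^ 2))) =O[𝓟 S ×ˢ 𝓝 0]
        fun z => z.2 ^ 3 :=
    ((isBigO_refl (fun z : X × ℝ => z.2 ^ 3) _).mul
      (((hp'.const_mul_left (2 * q)).add (htq (q ^ 2))).const_mul_left _)).congr_right
      fun z => mul_one _
  refine (htaylor.add hsquare).congr_left fun z => ?_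
  simp only [Function.comp_apply]
  ring

variable [MeasurableSpace X] {μ : Measure X}

theorem integrableOn_pow_of_isBigO_one (hS : MeasurableSet S) (hμ : μ S < ⊤)
    (hpm : AEStronglyMeasurable p (μ.restrict S)) (hpb : p =O[𝓟 S] fun _ => (1 : ℝ)) (k : ℕ) :
    IntegrableOn (fun x => p x ^ k) S μ := by
  obtain ⟨C, hC⟩ := isBigO_principal.1 hpb
  refine .of_bound hμ (hpm.pow k) (C ^ k) ?_
  filter_upwards [ae_restrict_mem hS] with x hx
  rw [norm_pow]
  exact pow_le_pow_left₀ (norm_nonneg _) (by simpa using hC x hx) k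

theorem integral_quadratic_of_integral_eq_zero [IsFiniteMeasure μ] (hp : Integrable p μ)
    (hp2 : Integrable (fun x => p x ^ 2) μ) (hp0 : ∫ x, p x ∂μ = 0) (a b c : ℝ) :
    ∫ x, (a + b * p x + c * p x ^ 2) ∂μ = a * μ.real univ + c * ∫ x, p x ^ 2 ∂μ := by
  rw [integral_add (by fun_prop) (by fun_prop), integral_add (by fun_prop) (by fun_prop),
    integral_const_mul, integral_const_mul, hp0, integral_const, smul_eq_mul]
  ring

theorem isBigO_setIntegral_inv_one_add_pow_sub (hS : MeasurableSet S) (hμ : μ S < ⊤)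
    (hpm : AEStronglyMeasurable p (μ.restrict S)) (hpb : p =O[𝓟 S] fun _ => (1 : ℝ))
    (hp0 : ∫ x in S, p x ∂μ = 0) (q : ℝ) (m : ℕ) :
    (fun t : ℝ => (∫ x in S, ((1 + (t * p x + t ^ 2 * q)) ^ m)⁻¹ ∂μ) -
      (μ.real S + t ^ 2 * (m * (m + 1) / 2 * (∫ x in S, p x ^ 2 ∂μ) - m * q * μ.real S)))
      =O[𝓝 0] fun t => t ^ 3 := by
  have : IsFiniteMeasure (μ.restrict S) := ⟨by simpa using hμ⟩
  have hp2 := integrableOn_pow_of_isBigO_one hS hμ hpm hpb 2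
  have hp1 : IntegrableOn p S μ := by simpa using integrableOn_pow_of_isBigO_one hS hμ hpm hpb 1
  have hrem := isBigO_inv_one_add_pow_sub_quadratic hpb q m
  have hrem_int := hrem.eventually_integrableOn (μ := μ) (g := fun t : ℝ => t ^ 3)
    (.of_forall fun t => by
      have := hpm.aemeasurable
      exact AEMeasurable.aestronglyMeasurable (by fun_prop)) hS hμ
  refine (hrem.set_integral_isBigO (g := fun t : ℝ => t ^ 3) hμ).congr' ?_ .rfl
  filter_upwards [hrem_int] with t ht
  have hpoly : IntegrableOn (fun x => 1 - m * q * t ^ 2 + -(m * t) * p x +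
      m * (m + 1) / 2 * t ^ 2 * p x ^ 2) S μ := by
    unfold IntegrableOn at *
    fun_prop
  have hinv : IntegrableOn (fun x => ((1 + (t * p x + t ^ 2 * q)) ^ m)⁻¹) S μ :=
    (ht.add hpoly).congr (ae_of_all _ fun x => by simp)
  rw [integral_sub hinv hpoly, integral_quadratic_of_integral_eq_zero hp1 hp2 hp0,
    measureReal_restrict_apply_univ]
  ring

theorem tendsto_setIntegral_inv_one_add_pow_sub_div_sq (hS : MeasurableSet S) (hμ : μ S < ⊤)
    (hpm : AEStronglyMeasurable p (μ.restrict S)) (hpb : p =O[𝓟 S] fun _ => (1 : ℝ))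
    (hp0 : ∫ x in S, p x ∂μ = 0) (q : ℝ) (m : ℕ) :
    Tendsto (fun t : ℝ => ((∫ x in S, ((1 + (t * p x + t ^ 2 * q)) ^ m)⁻¹ ∂μ) - μ.real S) / t ^ 2)
      (𝓝[≠] 0) (𝓝 (m * (m + 1) / 2 * (∫ x in S, p x ^ 2 ∂μ) - m * q * μ.real S)) := by
  have hlittleO := ((isBigO_setIntegral_inv_one_add_pow_sub hS hμ hpm hpb hp0 q m).trans_isLittleO
    (isLittleO_pow_pow (by norm_num : 2 < 3))).mono (nhdsWithin_le_nhds (s := {0}ᶜ))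
  rw [← zero_add (m * (m + 1) / 2 * (∫ x in S, p x ^ 2 ∂μ) - m * q * μ.real S)]
  refine (hlittleO.tendsto_div_nhds_zero.add_const _).congr' ?_
  filter_upwards [self_mem_nhdsWithin] with t (ht : t ≠ 0)
  field_simp
  ring

theorem add_mul_nonneg_of_tendsto_sub_div_sq {f g : ℝ → ℝ} {a b α β : ℝ}
    (hf : Tendsto (fun t => (f t - a) / t ^ 2) (𝓝[≠] 0) (𝓝 α))
    (hg : Tendsto (fun t => (g t - b) / t ^ 2) (𝓝[≠] 0) (𝓝 β))
    (hmin : ∀ᶠ t in 𝓝[≠] 0, a * b ≤ f t * g t) : 0 ≤ α * b + a * β := by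
  have hsq : Tendsto (fun t : ℝ => t ^ 2) (𝓝[≠] 0) (𝓝 0) :=
    ((continuous_pow 2).tendsto' 0 0 (by simp)).mono_left nhdsWithin_le_nhds
  have hlim : Tendsto (fun t => (f t - a) / t ^ 2 * (b + t ^ 2 * ((g t - b) / t ^ 2)) +
      a * ((g t - b) / t ^ 2)) (𝓝[≠] 0) (𝓝 (α * b + a * β)) := by
    simpa using (hf.mul ((hsq.mul hg).const_add b)).add (hg.const_mul a)
  refine ge_of_tendsto hlim ?_
  filter_upwards [hmin, self_mem_nhdsWithin] with t ht (ht0 : t ≠ 0)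
  have : (f t - a) / t ^ 2 * (b + t ^ 2 * ((g t - b) / t ^ 2)) + a * ((g t - b) / t ^ 2) =
      (f t * g t - a * b) / t ^ 2 := by
    field_simp
    ring
  rw [this]
  exact div_nonneg (sub_nonneg.2 ht) (sq_nonneg t)

end Expansion

section FracLinear

variable {E : Type*} [NormedAddCommGroup E] [InnerProductSpace ℝ E] {K S : Set E} {v x : E}

/-- The fractional linear map `x ↦ x / (1 + ⟪x, v⟫)`, which is dual under polarity to the
translation by `v`. At points of the hyperplane `⟪x, v⟫ = -1` its value is the junk value `0`. -/
def fracLinear (v x : E) : E :=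
  (1 + ⟪x, v⟫)⁻¹ • x

theorem one_add_inner_fracLinear_neg (h : 1 + ⟪x, v⟫ ≠ 0) :
    1 + ⟪fracLinear v x, -v⟫ = (1 + ⟪x, v⟫)⁻¹ := by
  rw [fracLinear, inner_neg_right, real_inner_smul_left]
  field_simp
  ring

theorem fracLinear_neg_fracLinear (h : 1 + ⟪x, v⟫ ≠ 0) : fracLinear (-v) (fracLinear v x) = x := by
  rw [fracLinear, one_add_inner_fracLinear_neg h, inv_inv, fracLinear, smul_inv_smul₀ h]

theorem injOn_fracLinear (h : ∀ x ∈ S, 1 + ⟪x, v⟫ ≠ 0) : InjOn (fracLinear v) S :=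
  LeftInvOn.injOn fun x hx => fracLinear_neg_fracLinear (h x hx)

theorem continuousAt_fracLinear (h : 1 + ⟪x, v⟫ ≠ 0) :
    ContinuousAt (fun q : E × E => fracLinear q.1 q.2) (v, x) := by
  unfold fracLinear
  fun_prop (disch := assumption)

theorem continuousOn_fracLinear (h : ∀ x ∈ S, 1 + ⟪x, v⟫ ≠ 0) : ContinuousOn (fracLinear v) S :=
  fun x hx => ((continuousAt_fracLinear (h x hx)).comp (by fun_prop)).continuousWithinAt

theorem convex_image_fracLinear (hK : Convex ℝ K) (h : ∀ x ∈ K, 0 < 1 + ⟪x, v⟫) :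
    Convex ℝ (fracLinear v '' K) := by
  rintro _ ⟨x, hx, rfl⟩ _ ⟨y, hy, rfl⟩ a b ha hb hab
  have hx0 := h x hx
  have hy0 := h y hy
  set s := a * (1 + ⟪x, v⟫)⁻¹ with hs
  set r := b * (1 + ⟪y, v⟫)⁻¹ with hr
  obtain ⟨u, hu, huxy⟩ := hK.exists_mem_add_smul_eq hx hy (p := s) (q := r)
    (by positivity) (by positivity)
  have hu_inner : (s + r) * ⟪u, v⟫ = s * ⟪x, v⟫ + r * ⟪y, v⟫ := by
    simpa only [inner_add_left, real_inner_smul_left] using congrArg (⟪·, v⟫) huxy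
  have hweight : (s + r) * (1 + ⟪u, v⟫) = 1 := by
    have hsx : s * (1 + ⟪x, v⟫) = a := by rw [hs]; field_simp
    have hry : r * (1 + ⟪y, v⟫) = b := by rw [hr]; field_simp
    linear_combination hu_inner + hsx + hry + hab
  refine ⟨u, hu, ?_⟩
  rw [fracLinear, ← eq_inv_of_mul_eq_one_left hweight, huxy, fracLinear, fracLinear, smul_smul,
    smul_smul]

theorem eventually_mem_image_fracLinear (hK : K ∈ 𝓝 0) :
    ∀ᶠ q : E × E in 𝓝 0, q.2 ∈ fracLinear q.1 '' K := by
  have hne : ∀ᶠ q : E × E in 𝓝 0, 1 + ⟪q.2, -q.1⟫ ≠ 0 :=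
    ContinuousAt.eventually_ne (by fun_prop) (by simp)
  have hinv : Tendsto (fun q : E × E => fracLinear (-q.1) q.2) (𝓝 0) (𝓝 0) := by
    have hcont : ContinuousAt (fun q : E × E => fracLinear (-q.1) q.2) 0 :=
      ContinuousAt.comp (f := fun q : E × E => (-q.1, q.2)) (continuousAt_fracLinear (by simp))
        (by fun_prop)
    simpa [ContinuousAt, fracLinear] using hcont
  filter_upwards [hne, hinv.eventually_mem hK] with q hq hqK
  exact ⟨_, hqK, by simpa using fracLinear_neg_fracLinear hq⟩

theorem eventually_forall_one_add_inner_pos (hS : IsCompact S) :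
    ∀ᶠ q : E × E in 𝓝 0, ∀ y ∈ S, 0 < 1 + ⟪y + q.1, q.2⟫ :=
  hS.eventually_forall_of_forall_eventually fun y _ =>
    continuousAt_const.eventually_lt
      (g := fun z : (E × E) × E => 1 + ⟪z.2 + z.1.1, z.1.2⟫) (by fun_prop) (by simp)

theorem hasFDerivAt_fracLinear (h : 1 + ⟪x, v⟫ ≠ 0) :
    HasFDerivAt (fracLinear v)
      ((1 + ⟪x, v⟫)⁻¹ • (ContinuousLinearMap.id ℝ E +
        (innerSL ℝ v).smulRight (-(1 + ⟪x, v⟫)⁻¹ • x))) x := by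
  have hden : HasFDerivAt (fun x : E => 1 + ⟪x, v⟫) (innerSL ℝ v) x := by
    simpa only [innerSL_apply_apply, real_inner_comm] using
      ((innerSL ℝ v).hasFDerivAt (x := x)).const_add 1
  convert! ((hasDerivAt_inv h).comp_hasFDerivAt x hden).smul (hasFDerivAt_id x) using 1
  ext y
  simp only [neg_smul, smul_add, add_apply, smul_apply, ContinuousLinearMap.id_apply,
    ContinuousLinearMap.smulRight_apply, coe_innerSL_apply, smul_neg, smul_smul,
    Function.comp_apply, id_eq, neg_apply, smul_eq_mul, add_right_inj, neg_inj]
  field_simp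

variable [FiniteDimensional ℝ E]

theorem det_fderiv_fracLinear (h : 1 + ⟪x, v⟫ ≠ 0) :
    (fderiv ℝ (fracLinear v) x).det = ((1 + ⟪x, v⟫) ^ (Module.finrank ℝ E + 1))⁻¹ := by
  have htrans : (fderiv ℝ (fracLinear v) x).toLinearMap = (1 + ⟪x, v⟫)⁻¹ •
      LinearMap.transvection (innerSL ℝ v).toLinearMap (-(1 + ⟪x, v⟫)⁻¹ • x) := by
    rw [(hasFDerivAt_fracLinear h).fderiv]
    rfl
  have hinner : 1 + ⟪v, -(1 + ⟪x, v⟫)⁻¹ • x⟫ = (1 + ⟪x, v⟫)⁻¹ := by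
    rw [real_inner_smul_right, real_inner_comm x v]
    field_simp
    ring
  rw [ContinuousLinearMap.det, htrans, LinearMap.det_smul, LinearMap.transvection.det,
    ContinuousLinearMap.coe_coe, innerSL_apply_apply, hinner, ← pow_succ, inv_pow]

variable [MeasurableSpace E] [BorelSpace E] (μ : Measure E) [μ.IsAddHaarMeasure]

theorem measureReal_image_fracLinear (hS : MeasurableSet S) (h : ∀ x ∈ S, 0 < 1 + ⟪x, v⟫) :
    μ.real (fracLinear v '' S) = ∫ x in S, ((1 + ⟪x, v⟫) ^ (Module.finrank ℝ E + 1))⁻¹ ∂μ := by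
  have hderiv : ∀ x ∈ S, HasFDerivWithinAt (fracLinear v) (fderiv ℝ (fracLinear v) x) S x :=
    fun x hx => (hasFDerivAt_fracLinear (h x hx).ne').differentiableAt.hasFDerivAt.hasFDerivWithinAt
  have hchange := integral_image_eq_integral_abs_det_fderiv_smul μ hS hderiv
    (injOn_fracLinear fun x hx => (h x hx).ne') fun _ => (1 : ℝ)
  rw [setIntegral_const, smul_eq_mul, mul_one] at hchange
  rw [hchange]
  refine setIntegral_congr_fun hS fun x hx => ?_
  have hx0 := h x hx
  simp only [det_fderiv_fracLinear hx0.ne', smul_eq_mul, mul_one]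
  exact abs_of_pos (by positivity)

theorem measureReal_image_fracLinear_image_add_right (hS : MeasurableSet S) {a : E}
    (h : ∀ y ∈ S, 0 < 1 + ⟪y + a, v⟫) :
    μ.real (fracLinear v '' ((· + a) '' S)) =
      ∫ y in S, ((1 + ⟪y + a, v⟫) ^ (Module.finrank ℝ E + 1))⁻¹ ∂μ := by
  have hemb := measurableEmbedding_addRight a
  rw [measureReal_image_fracLinear μ (hemb.measurableSet_image.2 hS) (forall_mem_image.2 h)]
  exact (measurePreserving_add_right μ a).setIntegral_image_emb hemb _ S

end FracLinear

section Polarity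

variable {n : ℕ} {K : Set (EuclideanSpace ℝ (Fin n))} {v w : EuclideanSpace ℝ (Fin n)}

theorem isClosed_polarBody (K : Set (EuclideanSpace ℝ (Fin n))) : IsClosed (polarBody K) := by
  simp only [polarBody, ofPred_forall]
  exact isClosed_biInter fun x _ => isClosed_le (by fun_prop) continuous_const

theorem polarBody_anti {K L : Set (EuclideanSpace ℝ (Fin n))} (h : K ⊆ L) :
    polarBody L ⊆ polarBody K :=
  fun _ hy x hx => hy x (h hx)

theorem polarBody_closedBall {r : ℝ} (hr : 0 < r) :
    polarBody (Metric.closedBall (0 : EuclideanSpace ℝ (Fin n)) r) = Metric.closedBall 0 r⁻¹ := by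
  ext y
  rw [mem_closedBall_zero_iff]
  refine ⟨fun hy => ?_, fun hy x hx => ?_⟩
  · rcases eq_or_ne y 0 with rfl | hy0
    · simpa using hr.le
    have hnorm : 0 < ‖y‖ := norm_pos_iff.2 hy0
    have hxy := hy ((r * ‖y‖⁻¹) • y) (by simp [norm_smul, abs_of_pos hr, hnorm.ne'])
    rw [real_inner_smul_left, real_inner_self_eq_norm_sq] at hxy
    rw [le_inv_comm₀ hnorm hr]
    field_simp at hxy ⊢
    exact hxy
  · rw [mem_closedBall_zero_iff] at hx
    calc ⟪x, y⟫ ≤ ‖x‖ * ‖y‖ := real_inner_le_norm x y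
      _ ≤ r * r⁻¹ := by gcongr
      _ = 1 := mul_inv_cancel₀ hr.ne'

theorem isCompact_polarBody (hK : K ∈ 𝓝 0) : IsCompact (polarBody K) := by
  obtain ⟨r, hr, hrK⟩ := Metric.nhds_basis_closedBall.mem_iff.1 hK
  refine (isCompact_closedBall 0 r⁻¹).of_isClosed_subset (isClosed_polarBody K) ?_
  exact (polarBody_anti hrK).trans (polarBody_closedBall hr).subset

theorem polarBody_mem_nhds_zero (hK : Bornology.IsBounded K) : polarBody K ∈ 𝓝 0 := by
  obtain ⟨R, hR, hKR⟩ := hK.subset_closedBall_lt 0 0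
  refine mem_of_superset (Metric.closedBall_mem_nhds 0 (inv_pos.2 hR)) ?_
  exact (polarBody_closedBall hR).superset.trans (polarBody_anti hKR)

theorem polarBody_image_fracLinear (h : ∀ x ∈ K, 0 < 1 + ⟪x, v⟫) :
    polarBody (fracLinear v '' K) = (· + v) '' polarBody K := by
  ext y
  rw [image_add_right, mem_preimage, polarBody, polarBody, mem_ofPred_eq, forall_mem_image]
  refine forall₂_congr fun x hx => ?_
  rw [fracLinear, real_inner_smul_left, inv_mul_le_iff₀ (h x hx), inner_add_right, inner_neg_right]
  constructor <;> intro <;> linarith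

theorem polarBody_image_add_right (hw : w ∈ K) (h : ∀ y ∈ polarBody K, 0 < 1 + ⟪y, w⟫) :
    polarBody ((· + w) '' K) = fracLinear w '' polarBody K := by
  apply Subset.antisymm
  · intro z hz
    have hzK : ∀ x ∈ K, ⟪x, z⟫ ≤ 1 + ⟪z, -w⟫ := fun x hx => by
      have := hz _ (mem_image_of_mem _ hx)
      rw [inner_add_left] at this
      rw [inner_neg_right, real_inner_comm w z]
      linarith
    have hpos : 0 < 1 + ⟪z, -w⟫ := by
      have := hzK w hw
      rw [inner_neg_right, real_inner_comm w z] at this ⊢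
      linarith
    refine ⟨fracLinear (-w) z, fun x hx => ?_, ?_⟩
    · rw [fracLinear, real_inner_smul_right, inv_mul_le_iff₀ hpos, mul_one]
      exact hzK x hx
    · simpa using fracLinear_neg_fracLinear hpos.ne'
  · rintro _ ⟨y, hy, rfl⟩ _ ⟨x, hx, rfl⟩
    rw [fracLinear, real_inner_smul_right, inv_mul_le_iff₀ (h y hy), inner_add_left,
      real_inner_comm y w]
    linarith [hy x hx]

end Polarity

section PerturbedBody

/-- The perturbation of `K` by the fractional linear map with parameter `v` followed by the
translation by `w`. Its polar body arises from `K°` by the dual operations: the translation by `v`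
followed by the fractional linear map with parameter `w`. -/
def perturbedBody {E : Type*} [NormedAddCommGroup E] [InnerProductSpace ℝ E] (K : Set E)
    (v w : E) : Set E :=
  (· + w) '' (fracLinear v '' K)

section InnerProductSpace

variable {E : Type*} [NormedAddCommGroup E] [InnerProductSpace ℝ E] {K : Set E} {v w : E}

theorem isCompact_perturbedBody (hK : IsCompact K) (h : ∀ x ∈ K, 1 + ⟪x, v⟫ ≠ 0) :
    IsCompact (perturbedBody K v w) :=
  (hK.image_of_continuousOn (continuousOn_fracLinear h)).image (by fun_prop)

theorem convex_perturbedBody (hK : Convex ℝ K) (h : ∀ x ∈ K, 0 < 1 + ⟪x, v⟫) :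
    Convex ℝ (perturbedBody K v w) := by
  simpa only [perturbedBody, add_comm w] using (convex_image_fracLinear hK h).translate w

theorem eventually_zero_mem_interior_perturbedBody (hK : K ∈ 𝓝 0) :
    ∀ᶠ q : E × E in 𝓝 0, (0 : E) ∈ interior (perturbedBody K q.1 q.2) := by
  have hlim : Tendsto (fun z : (E × E) × E => (z.1.1, z.2 - z.1.2)) (𝓝 (0, 0)) (𝓝 0) :=
    Continuous.tendsto' (by fun_prop) _ _ (by simp)
  have hmem := hlim.eventually (eventually_mem_image_fracLinear hK)
  rw [nhds_prod_eq] at hmem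
  filter_upwards [hmem.curry] with q hq
  rw [mem_interior_iff_mem_nhds, perturbedBody, image_add_right]
  simp only [sub_eq_add_neg] at hq
  exact hq

theorem eventually_hausdorffDist_perturbedBody_lt (hK : IsCompact K) {ε : ℝ} (hε : 0 < ε) :
    ∀ᶠ q : E × E in 𝓝 0, Metric.hausdorffDist K (perturbedBody K q.1 q.2) < ε := by
  have hdist : ∀ᶠ q : E × E in 𝓝 0, ∀ x ∈ K, dist x (fracLinear q.1 x + q.2) < ε / 2 := by
    refine hK.eventually_forall_of_forall_eventually fun x _ => ?_
    have hfrac : ContinuousAt (fun z : (E × E) × E => fracLinear z.1.1 z.2) (0, x) :=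
      ContinuousAt.comp (f := fun z : (E × E) × E => (z.1.1, z.2))
        (continuousAt_fracLinear (by simp)) (by fun_prop)
    have hcont : ContinuousAt (fun z : (E × E) × E => dist z.2 (fracLinear z.1.1 z.2 + z.1.2))
        (0, x) := by fun_prop
    exact hcont.eventually_lt continuousAt_const (by simpa [fracLinear] using hε)
  filter_upwards [hdist] with q hq
  refine (Metric.hausdorffDist_le_of_mem_dist (half_pos hε).le (fun x hx => ?_) ?_).trans_lt
    (half_lt_self hε)
  · exact ⟨_, mem_image_of_mem _ (mem_image_of_mem _ hx), (hq x hx).le⟩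
  · rintro _ ⟨_, ⟨x, hx, rfl⟩, rfl⟩
    exact ⟨x, hx, by simpa only [dist_comm] using (hq x hx).le⟩

end InnerProductSpace

variable {n : ℕ} {K : Set (EuclideanSpace ℝ (Fin n))} {v w : EuclideanSpace ℝ (Fin n)}

theorem polarBody_perturbedBody (hw : w ∈ fracLinear v '' K) (hK : ∀ x ∈ K, 0 < 1 + ⟪x, v⟫)
    (hK' : ∀ y ∈ polarBody K, 0 < 1 + ⟪y + v, w⟫) :
    polarBody (perturbedBody K v w) = fracLinear w '' ((· + v) '' polarBody K) := by
  have hpolar := polarBody_image_fracLinear hK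
  rw [perturbedBody, polarBody_image_add_right hw, hpolar]
  rw [hpolar]
  exact forall_mem_image.2 hK'

theorem vp_perturbedBody (hKm : MeasurableSet K) (hw : w ∈ fracLinear v '' K)
    (hK : ∀ x ∈ K, 0 < 1 + ⟪x, v⟫) (hK' : ∀ y ∈ polarBody K, 0 < 1 + ⟪y + v, w⟫) :
    vp (perturbedBody K v w) = (∫ x in K, ((1 + ⟪x, v⟫) ^ (n + 1))⁻¹) *
      ∫ y in polarBody K, ((1 + ⟪y + v, w⟫) ^ (n + 1))⁻¹ := by
  have hvol : volume.real (perturbedBody K v w) = ∫ x in K, ((1 + ⟪x, v⟫) ^ (n + 1))⁻¹ := by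
    rw [perturbedBody, image_add_right, measureReal_def, measure_preimage_add_right,
      ← measureReal_def, measureReal_image_fracLinear volume hKm hK, finrank_euclideanSpace_fin]
  have hvol_polar : volume.real (polarBody (perturbedBody K v w)) =
      ∫ y in polarBody K, ((1 + ⟪y + v, w⟫) ^ (n + 1))⁻¹ := by
    rw [polarBody_perturbedBody hw hK hK', measureReal_image_fracLinear_image_add_right volume
      (isClosed_polarBody K).measurableSet hK', finrank_euclideanSpace_fin]
  rw [vp, ← measureReal_def, ← measureReal_def, hvol, hvol_polar]

end PerturbedBody

section LocalMinimizer

/-- `K` is a local minimizer of the volume product among convex bodies with the origin in their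
interior, with respect to the Hausdorff distance. -/
def IsVolumeProductLocalMin {n : ℕ} (K : Set (EuclideanSpace ℝ (Fin n))) : Prop :=
  ∃ ε > 0, ∀ L : Set (EuclideanSpace ℝ (Fin n)),
    IsCompact L → Convex ℝ L → (0 : EuclideanSpace ℝ (Fin n)) ∈ interior L →
    Metric.hausdorffDist K L < ε → vp K ≤ vp L

variable {n : ℕ} {K : Set (EuclideanSpace ℝ (Fin n))}

theorem eventually_vp_le_integral_mul_integral (hmin : IsVolumeProductLocalMin K)
    (hKcomp : IsCompact K) (hKconv : Convex ℝ K) (hK0 : K ∈ 𝓝 0) :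
    ∀ᶠ q : EuclideanSpace ℝ (Fin n) × EuclideanSpace ℝ (Fin n) in 𝓝 0,
      vp K ≤ (∫ x in K, ((1 + ⟪x, q.1⟫) ^ (n + 1))⁻¹) *
        ∫ y in polarBody K, ((1 + ⟪y + q.1, q.2⟫) ^ (n + 1))⁻¹ := by
  obtain ⟨ε, hε, hmin⟩ := hmin
  have hswap : Tendsto (fun q : EuclideanSpace ℝ (Fin n) × EuclideanSpace ℝ (Fin n) =>
      ((0 : EuclideanSpace ℝ (Fin n)), q.1)) (𝓝 0) (𝓝 0) :=
    Continuous.tendsto' (by fun_prop) _ _ (by simp)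
  filter_upwards [hswap.eventually (eventually_forall_one_add_inner_pos hKcomp),
    eventually_forall_one_add_inner_pos (isCompact_polarBody hK0),
    eventually_mem_image_fracLinear hK0, eventually_zero_mem_interior_perturbedBody hK0,
    eventually_hausdorffDist_perturbedBody_lt hKcomp hε] with q hK hK' hw h0 hdist
  simp only [add_zero] at hK
  rw [← vp_perturbedBody hKcomp.measurableSet hw hK hK']
  exact hmin _ (isCompact_perturbedBody hKcomp fun x hx => (hK x hx).ne')
    (convex_perturbedBody hKconv hK) h0 hdist

theorem tendsto_integral_perturbed_sub_div_sq {S : Set (EuclideanSpace ℝ (Fin n))}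
    (hS : IsCompact S) (hS0 : ∫ x in S, x = 0) (a w : EuclideanSpace ℝ (Fin n)) :
    Tendsto (fun t : ℝ =>
      ((∫ y in S, ((1 + ⟪y + t • a, t • w⟫) ^ (n + 1))⁻¹) - volume.real S) / t ^ 2) (𝓝[≠] 0)
      (𝓝 ((n + 1) * (n + 2) / 2 * (∫ y in S, ⟪y, w⟫ ^ 2) - (n + 1) * ⟪a, w⟫ * volume.real S)) := by
  have hcont : Continuous fun y : EuclideanSpace ℝ (Fin n) => ⟪y, w⟫ := by fun_prop
  have hid : IntegrableOn (fun y : EuclideanSpace ℝ (Fin n) => y) S :=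
    continuousOn_id.integrableOn_compact hS
  have hinner0 : ∫ y in S, ⟪y, w⟫ = 0 := by
    simpa only [real_inner_comm, hS0, inner_zero_right] using integral_inner (𝕜 := ℝ) hid w
  have hlim := tendsto_setIntegral_inv_one_add_pow_sub_div_sq hS.measurableSet hS.measure_lt_top
    hcont.aestronglyMeasurable (hcont.continuousOn.isBigO_principal hS (by simp)) hinner0
    ⟪a, w⟫ (n + 1)
  convert! hlim using 2
  · simp only [inner_add_left, real_inner_smul_left, real_inner_smul_right]
    ring_nf
  · push_cast
    ring_nf

theorem integral_eq_zero_of_bary_eq_zero {A : Set (EuclideanSpace ℝ (Fin n))}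
    (hA : 0 < volume.real A) (h : bary A = 0) : ∫ x in A, x = 0 :=
  (smul_eq_zero.1 h).resolve_left (inv_ne_zero hA.ne')

theorem two_mul_inner_le_of_isVolumeProductLocalMin (hmin : IsVolumeProductLocalMin K)
    (hKcomp : IsCompact K) (hKconv : Convex ℝ K) (hK0 : K ∈ 𝓝 0)
    (hbK : bary K = 0) (hbKpolar : bary (polarBody K) = 0) (v w : EuclideanSpace ℝ (Fin n)) :
    2 * ⟪v, w⟫ ≤ (n + 2) * ((volume.real K)⁻¹ * (∫ x in K, ⟪x, v⟫ ^ 2) +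
      (volume.real (polarBody K))⁻¹ * ∫ y in polarBody K, ⟪y, w⟫ ^ 2) := by
  have hpolar := isCompact_polarBody hK0
  have hvol : 0 < volume.real K :=
    ENNReal.toReal_pos (Measure.measure_pos_of_mem_nhds _ hK0).ne' hKcomp.measure_ne_top
  have hvol_polar : 0 < volume.real (polarBody K) :=
    ENNReal.toReal_pos (Measure.measure_pos_of_mem_nhds _
      (polarBody_mem_nhds_zero hKcomp.isBounded)).ne' hpolar.measure_ne_top
  have hline : Tendsto (fun t : ℝ => (t • v, t • w)) (𝓝[≠] 0) (𝓝 0) :=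
    (Continuous.tendsto' (by fun_prop) _ _ (by simp)).mono_left nhdsWithin_le_nhds
  have hmin_line := hline.eventually
    (eventually_vp_le_integral_mul_integral hmin hKcomp hKconv hK0)
  have hsecond := add_mul_nonneg_of_tendsto_sub_div_sq
    (tendsto_integral_perturbed_sub_div_sq hKcomp (integral_eq_zero_of_bary_eq_zero hvol hbK) 0 v)
    (tendsto_integral_perturbed_sub_div_sq hpolar
      (integral_eq_zero_of_bary_eq_zero hvol_polar hbKpolar) v w)
    (by simp only [smul_zero, add_zero]; exact hmin_line)
  rw [inner_zero_left] at hsecond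
  set κ := volume.real K
  set κ' := volume.real (polarBody K)
  have hfactor (I J c : ℝ) : ((n + 1) * (n + 2) / 2 * I - (n + 1) * 0 * κ) * κ' +
      κ * ((n + 1) * (n + 2) / 2 * J - (n + 1) * c * κ') =
      (n + 1) * κ * κ' / 2 * ((n + 2) * (κ⁻¹ * I + κ'⁻¹ * J) - 2 * c) := by
    field_simp
    ring
  rw [hfactor] at hsecond
  exact sub_nonneg.1 (nonneg_of_mul_nonneg_right hsecond (by positivity))

end LocalMinimizer

section Covariance

theorem isHermitian_covM {n : ℕ} (S : Set (EuclideanSpace ℝ (Fin n))) : (covM S).IsHermitian := by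
  ext i j
  simp [covM, mul_comm]

theorem dotProduct_covM_mulVec {n : ℕ} {S : Set (EuclideanSpace ℝ (Fin n))} (hS : IsCompact S)
    (v : Fin n → ℝ) :
    v ⬝ᵥ covM S *ᵥ v = (volume.real S)⁻¹ * ∫ x in S, ⟪x, WithLp.toLp 2 v⟫ ^ 2 := by
  have hsq (x : EuclideanSpace ℝ (Fin n)) :
      ⟪x, WithLp.toLp 2 v⟫ ^ 2 = ∑ i, ∑ j, v i * v j * (x i * x j) := by
    simp only [PiLp.inner_apply, RCLike.inner_apply, conj_trivial, sq, Finset.sum_mul_sum]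
    exact Finset.sum_congr rfl fun i _ => Finset.sum_congr rfl fun j _ => by ring
  have hint (i j : Fin n) :
      IntegrableOn (fun x : EuclideanSpace ℝ (Fin n) => v i * v j * (x i * x j)) S :=
    ContinuousOn.integrableOn_compact hS (by fun_prop)
  simp_rw [hsq]
  rw [integral_finsetSum _ fun i _ => integrable_finsetSum _ fun j _ => hint i j]
  simp_rw [integral_finsetSum Finset.univ fun j _ => hint _ j, integral_const_mul]
  simp only [dotProduct, Matrix.mulVec, covM, Matrix.of_apply, Finset.mul_sum, measureReal_def]
  exact Finset.sum_congr rfl fun i _ => Finset.sum_congr rfl fun j _ => by ring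

variable {ι : Type*} [Fintype ι] [DecidableEq ι]

theorem inv_mulVec_dotProduct_mulVec_inv_mulVec (A : Matrix ι ι ℝ) (w : ι → ℝ) :
    A⁻¹ *ᵥ w ⬝ᵥ A *ᵥ (A⁻¹ *ᵥ w) = w ⬝ᵥ A⁻¹ *ᵥ w := by
  by_cases hA : IsUnit A.det
  · rw [Matrix.mulVec_mulVec, Matrix.mul_nonsing_inv _ hA, Matrix.one_mulVec, dotProduct_comm]
  · simp [Matrix.nonsing_inv_apply_not_isUnit _ hA]

theorem posSemidef_sub_inv_of_two_mul_dotProduct_le {A B : Matrix ι ι ℝ} (hA : A.IsHermitian)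
    (hB : B.IsHermitian) {c : ℝ} (hc : 0 < c)
    (h : ∀ v w : ι → ℝ, 2 * (v ⬝ᵥ w) ≤ c * (v ⬝ᵥ A *ᵥ v + w ⬝ᵥ B *ᵥ w)) :
    (B - (c ^ 2)⁻¹ • A⁻¹).PosSemidef := by
  refine .of_dotProduct_mulVec_nonneg (hB.sub (hA.inv.smul (.all _))) fun w => ?_
  -- For fixed `w`, this `v` minimizes the difference of the two sides of `h v w`.
  have hw := h (c⁻¹ • A⁻¹ *ᵥ w) w
  simp only [Matrix.mulVec_smul, smul_dotProduct, dotProduct_smul, smul_eq_mul,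
    inv_mulVec_dotProduct_mulVec_inv_mulVec, dotProduct_comm _ w] at hw
  rw [star_trivial, Matrix.sub_mulVec, dotProduct_sub, Matrix.smul_mulVec, dotProduct_smul,
    smul_eq_mul]
  refine nonneg_of_mul_nonneg_right (a := c) ?_ hc
  field_simp at hw ⊢
  linarith

end Covariance

theorem stmt0 {n : ℕ} (hn : 1 ≤ n) (K : Set (EuclideanSpace ℝ (Fin n)))
    (hKcomp : IsCompact K) (hKconv : Convex ℝ K)
    (hK0 : (0 : EuclideanSpace ℝ (Fin n)) ∈ interior K)
    (hmin : ∃ ε > 0, ∀ L : Set (EuclideanSpace ℝ (Fin n)),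
      IsCompact L → Convex ℝ L → (0 : EuclideanSpace ℝ (Fin n)) ∈ interior L →
      Metric.hausdorffDist K L < ε → vp K ≤ vp L)
    (hbK : bary K = 0) (hbKpolar : bary (polarBody K) = 0) :
    (covM (polarBody K) - ((n + 2 : ℝ) ^ 2)⁻¹ • (covM K)⁻¹).PosSemidef := by
  have hKnhds : K ∈ 𝓝 0 := mem_interior_iff_mem_nhds.1 hK0
  refine posSemidef_sub_inv_of_two_mul_dotProduct_le (isHermitian_covM K)
    (isHermitian_covM (polarBody K)) (by positivity) fun v w => ?_
  rw [dotProduct_covM_mulVec hKcomp, dotProduct_covM_mulVec (isCompact_polarBody hKnhds)]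
  simpa [PiLp.inner_apply, dotProduct, mul_comm] using two_mul_inner_le_of_isVolumeProductLocalMin
    hmin hKcomp hKconv hKnhds hbK hbKpolar (WithLp.toLp 2 v) (WithLp.toLp 2 w)
end
end

section
/- Let n ≥ 1 and let K ⊂ ℝⁿ be a convex body containing the origin in its interior. Then the origin (0,0) is a critical point of the function F_K(x,ξ) = vp((K°+ξ)° + x) (i.e., the differential of F_K at (0,0) vanishes) if and only if G_K = 0 and G_{K°} = 0. -/
open MeasureTheory RealInnerProductSpace

noncomputable section

/-- The functional `F_K(x, ξ) = vp((K° + ξ)° + x)`. -/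
def FK {n : ℕ} (K : Set (EuclideanSpace ℝ (Fin n)))
    (p : EuclideanSpace ℝ (Fin n) × EuclideanSpace ℝ (Fin n)) : ℝ :=
  vp ((fun y => y + p.1) '' polarBody ((fun y => y + p.2) '' polarBody K))

/-!
Translating a convex body by `x` transforms its polar body by the projective map
`z ↦ z / (1 + ⟪x, z⟫)`, whose Jacobian determinant is `(1 + ⟪x, z⟫)⁻⁽ⁿ⁺¹⁾`. Together with the
bipolar theorem this turns both factors of `F_K` near the origin into integrals over fixed bodies,
`F_K(x, ξ) = ∫_K (1 + ⟪ξ, z⟫)⁻⁽ⁿ⁺¹⁾ dz · ∫_{K°} (1 + ⟪x, z + ξ⟫)⁻⁽ⁿ⁺¹⁾ dz`.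
Differentiating under the integral signs shows that the gradient of `F_K` at the origin is
`-(n + 1) vp(K) (G_{K°}, G_K)`.
-/

open scoped Topology

section ParametricIntegral

variable {H E F : Type*} [NormedAddCommGroup H] [NormedSpace ℝ H]
  [NormedAddCommGroup E] [NormedSpace ℝ E]
  [NormedAddCommGroup F] [NormedSpace ℝ F]

/-- The partial derivative in the parameter is written `fderiv f (x, z) ∘ inl`, which, unlike
`fderiv (f · z) x`, is visibly continuous in `(x, z)`. -/
theorem exists_eventually_forall_norm_fderiv_comp_inl_le {f : H → E → F} {x₀ : H} {S : Set E}
    (hS : IsCompact S) (hf : ∀ z ∈ S, ContDiffAt ℝ 1 (Function.uncurry f) (x₀, z)) :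
    ∃ C, ∀ᶠ x in 𝓝 x₀, ∀ z ∈ S,
      ‖(fderiv ℝ (Function.uncurry f) (x, z)).comp (.inl ℝ H E)‖ ≤ C := by
  have hcont : ∀ z ∈ S, ContinuousAt
      (fun q ↦ (fderiv ℝ (Function.uncurry f) q).comp (.inl ℝ H E)) (x₀, z) := fun z hz ↦
    ((hf z hz).continuousAt_fderiv one_ne_zero).clm_comp continuousAt_const
  obtain ⟨C, hC⟩ := hS.exists_bound_of_continuousOn fun z hz ↦
    ((hcont z hz).comp (Continuous.prodMk_right x₀).continuousAt).continuousWithinAt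
  refine ⟨C + 1, hS.eventually_forall_of_forall_eventually fun z hz ↦ ?_⟩
  exact ((hcont z hz).norm.eventually_lt_const ((hC z hz).trans_lt (lt_add_one C))).mono
    fun _ ↦ le_of_lt

theorem hasFDerivAt_setIntegral_of_contDiffAt [MeasurableSpace E] [OpensMeasurableSpace E]
    {μ : Measure E} [IsFiniteMeasureOnCompacts μ] {f : H → E → F} {x₀ : H} {S : Set E}
    (hS : IsCompact S)
    (hf : ∀ z ∈ S, ContDiffAt ℝ 1 (Function.uncurry f) (x₀, z)) :
    HasFDerivAt (fun x ↦ ∫ z in S, f x z ∂μ) (∫ z in S, fderiv ℝ (f · z) x₀ ∂μ) x₀ := by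
  have hdiff : ∀ᶠ x in 𝓝 x₀, ∀ z ∈ S, DifferentiableAt ℝ (Function.uncurry f) (x, z) :=
    hS.eventually_forall_of_forall_eventually fun z hz ↦
      ((hf z hz).eventually (by simp)).mono fun _ h ↦ h.differentiableAt one_ne_zero
  have hpartial : ∀ᶠ x in 𝓝 x₀, ∀ z ∈ S, HasFDerivAt (f · z)
      ((fderiv ℝ (Function.uncurry f) (x, z)).comp (.inl ℝ H E)) x :=
    hdiff.mono fun x hx z hz ↦
      (hx z hz).hasFDerivAt.comp (f := (·, z)) x (hasFDerivAt_prodMk_left x z)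
  have hcont : ∀ᶠ x in 𝓝 x₀, ContinuousOn (f x) S := hdiff.mono fun x hx z hz ↦
    ((hx z hz).continuousAt.comp (f := (x, ·))
      (Continuous.prodMk_right x).continuousAt).continuousWithinAt
  have hcont' : ContinuousOn
      (fun z ↦ (fderiv ℝ (Function.uncurry f) (x₀, z)).comp (.inl ℝ H E)) S := fun z hz ↦
    ((((hf z hz).continuousAt_fderiv one_ne_zero).comp (f := (x₀, ·))
      (Continuous.prodMk_right x₀).continuousAt).clm_comp continuousAt_const).continuousWithinAt
  obtain ⟨C, hC⟩ := exists_eventually_forall_norm_fderiv_comp_inl_le hS hf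
  have hderiv := hasFDerivAt_integral_of_dominated_of_fderiv_le (μ := μ.restrict S)
    (bound := fun _ ↦ C) (hC.and hpartial)
    (hcont.mono fun x hx ↦ hx.aestronglyMeasurable_of_isCompact hS hS.measurableSet)
    (hcont.self_of_nhds.integrableOn_compact hS)
    (hcont'.aestronglyMeasurable_of_isCompact hS hS.measurableSet)
    (ae_restrict_of_forall_mem hS.measurableSet fun z hz x hx ↦ hx.1 z hz)
    (continuousOn_const.integrableOn_compact hS)
    (ae_restrict_of_forall_mem hS.measurableSet fun z hz x hx ↦ hx.2 z hz)
  rwa [← setIntegral_congr_fun hS.measurableSet fun z hz ↦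
    (hpartial.self_of_nhds z hz).fderiv] at hderiv

end ParametricIntegral

section InnerProduct

variable {V : Type*} [NormedAddCommGroup V] [InnerProductSpace ℝ V] {φ : ℝ → ℝ}

theorem hasFDerivAt_comp_inner_add {φ' : ℝ} (hφ : HasDerivAt φ φ' 0) (z : V) :
    HasFDerivAt (fun p : V × V ↦ φ ⟪p.1, z + p.2⟫) (φ' • (innerSL ℝ z).comp (.fst ℝ V V))
      (0, 0) := by
  have hinner : HasFDerivAt (fun p : V × V ↦ ⟪p.1, z + p.2⟫)
      ((innerSL ℝ z).comp (.fst ℝ V V)) (0, 0) := by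
    refine (hasFDerivAt_fst.inner ℝ (hasFDerivAt_snd.const_add z)).congr_fderiv ?_
    ext <;> simp [real_inner_comm]
  exact HasDerivAt.comp_hasFDerivAt (h₂ := φ) (0, 0) (by simpa using hφ) hinner

theorem hasFDerivAt_setIntegral_comp_inner_add [CompleteSpace V] [MeasurableSpace V]
    [OpensMeasurableSpace V] {μ : Measure V} [IsFiniteMeasureOnCompacts μ] {S : Set V}
    (hS : IsCompact S) (hφ : ContDiffAt ℝ 1 φ 0) :
    HasFDerivAt (fun p : V × V ↦ ∫ z in S, φ ⟪p.1, z + p.2⟫ ∂μ)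
      (deriv φ 0 • (innerSL ℝ (∫ z in S, z ∂μ)).comp (.fst ℝ V V)) (0, 0) := by
  have hsmooth : ∀ z ∈ S, ContDiffAt ℝ 1
      (Function.uncurry fun (p : V × V) z ↦ φ ⟪p.1, z + p.2⟫) ((0, 0), z) := fun z _ ↦
    ContDiffAt.comp (g := φ) (f := fun q : (V × V) × V ↦ ⟪q.1.1, q.2 + q.1.2⟫) _ (by simpa)
      (ContDiffAt.inner ℝ (by fun_prop) (by fun_prop))
  have hφ' : HasDerivAt φ (deriv φ 0) 0 := (hφ.differentiableAt one_ne_zero).hasDerivAt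
  let L : V →L[ℝ] V × V →L[ℝ] ℝ :=
    deriv φ 0 • ((ContinuousLinearMap.compL ℝ (V × V) V ℝ).flip (.fst ℝ V V)).comp (innerSL ℝ)
  have hint : IntegrableOn (fun z ↦ z) S μ := continuousOn_id.integrableOn_compact hS
  have hcomm := ContinuousLinearMap.integral_comp_comm (𝕜 := ℝ) (Fₗ := V × V →L[ℝ] ℝ) L hint
  have hL : ∫ z in S, fderiv ℝ (fun p : V × V ↦ φ ⟪p.1, z + p.2⟫) (0, 0) ∂μ =
      L (∫ z in S, z ∂μ) := by
    simp only [(hasFDerivAt_comp_inner_add hφ' _).fderiv]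
    exact hcomm
  exact (hasFDerivAt_setIntegral_of_contDiffAt hS hsmooth).congr_fderiv hL

theorem coprod_innerSL_eq_zero_iff {v w : V} :
    (innerSL ℝ v).coprod (innerSL ℝ w) = 0 ↔ v = 0 ∧ w = 0 := by
  refine ⟨fun h ↦ ⟨?_, ?_⟩, ?_⟩
  · simpa using DFunLike.congr_fun h (v, 0)
  · simpa using DFunLike.congr_fun h (0, w)
  · rintro ⟨rfl, rfl⟩
    ext <;> simp

end InnerProduct

section ProjectiveMap

variable {E : Type*} [NormedAddCommGroup E] [NormedSpace ℝ E] {f : StrongDual ℝ E} {z : E}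

/-- The fractional linear map `z ↦ z / (1 + f z)` attached to a continuous linear functional `f`.
Translating a convex body by `x` transforms its polar body by the map attached to `⟪x, ·⟫`. Where
`1 + f z = 0` the value is the junk value `0`. -/
def projectiveMap (f : StrongDual ℝ E) (z : E) : E :=
  (1 + f z)⁻¹ • z

theorem one_sub_apply_projectiveMap (hz : 1 + f z ≠ 0) :
    1 - f (projectiveMap f z) = (1 + f z)⁻¹ := by
  simp only [projectiveMap, map_smul, smul_eq_mul]
  field_simp
  ring

theorem projectiveMap_neg_projectiveMap (hz : 1 + f z ≠ 0) :
    projectiveMap (-f) (projectiveMap f z) = z := by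
  rw [projectiveMap, neg_apply, ← sub_eq_add_neg, one_sub_apply_projectiveMap hz,
    inv_inv, projectiveMap, smul_inv_smul₀ hz]

theorem injOn_projectiveMap {S : Set E} (hS : ∀ z ∈ S, 1 + f z ≠ 0) :
    Set.InjOn (projectiveMap f) S :=
  Set.LeftInvOn.injOn (f₁' := projectiveMap (-f)) fun z hz ↦
    projectiveMap_neg_projectiveMap (hS z hz)

theorem hasFDerivAt_projectiveMap (hz : 1 + f z ≠ 0) :
    HasFDerivAt (projectiveMap f)
      ((1 + f z)⁻¹ • (.id ℝ E - (1 + f z)⁻¹ • f.smulRight z)) z := by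
  have hinv : HasFDerivAt (fun w ↦ (1 + f w)⁻¹) (-((1 + f z) ^ 2)⁻¹ • f) z :=
    (hasDerivAt_inv hz).comp_hasFDerivAt z (f.hasFDerivAt.const_add 1)
  refine (hinv.smul (hasFDerivAt_id z)).congr_fderiv ?_
  ext w
  simp [smul_smul, sub_eq_add_neg, sq]

theorem det_fderiv_projectiveMap [FiniteDimensional ℝ E] (hz : 1 + f z ≠ 0) :
    (fderiv ℝ (projectiveMap f) z).det = ((1 + f z) ^ (Module.finrank ℝ E + 1))⁻¹ := by
  have htrans : (fderiv ℝ (projectiveMap f) z : E →ₗ[ℝ] E) =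
      (1 + f z)⁻¹ • LinearMap.transvection (f : E →ₗ[ℝ] ℝ) (-projectiveMap f z) := by
    rw [(hasFDerivAt_projectiveMap hz).fderiv]
    ext w
    simp [projectiveMap, LinearMap.transvection.apply, sub_eq_add_neg, smul_smul,
      mul_left_comm, mul_comm]
  have hfactor : 1 + f (-projectiveMap f z) = (1 + f z)⁻¹ := by
    rw [map_neg, ← sub_eq_add_neg, one_sub_apply_projectiveMap hz]
  rw [ContinuousLinearMap.det, htrans, LinearMap.det_smul, LinearMap.transvection.det,
    ContinuousLinearMap.coe_coe, hfactor, ← pow_succ, inv_pow]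

theorem measureReal_image_projectiveMap [FiniteDimensional ℝ E] [MeasurableSpace E] [BorelSpace E]
    (μ : Measure E) [μ.IsAddHaarMeasure] {S : Set E} (hS : MeasurableSet S)
    (hpos : ∀ z ∈ S, 0 < 1 + f z) :
    μ.real (projectiveMap f '' S) =
      ∫ z in S, ((1 + f z) ^ (Module.finrank ℝ E + 1))⁻¹ ∂μ := by
  have hderiv : ∀ z ∈ S,
      HasFDerivWithinAt (projectiveMap f) (fderiv ℝ (projectiveMap f) z) S z := fun z hz ↦
    (hasFDerivAt_projectiveMap (hpos z hz).ne').differentiableAt.hasFDerivAt.hasFDerivWithinAt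
  rw [← setIntegral_one_eq_measureReal, integral_image_eq_integral_abs_det_fderiv_smul μ hS hderiv
    (injOn_projectiveMap fun z hz ↦ (hpos z hz).ne')]
  refine setIntegral_congr_fun hS fun z hz ↦ ?_
  have := hpos z hz
  simp only [smul_eq_mul, mul_one]
  rw [det_fderiv_projectiveMap this.ne', abs_of_pos (by positivity)]

end ProjectiveMap

section PolarBody

variable {n : ℕ} {M : Set (EuclideanSpace ℝ (Fin n))}

theorem polarBody_eq_biInter :
    polarBody M = ⋂ x ∈ M, {y | ⟪x, y⟫ ≤ 1} := by
  ext
  simp [polarBody]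

theorem isClosed_polarBody_s2 : IsClosed (polarBody M) := by
  rw [polarBody_eq_biInter]
  exact isClosed_biInter fun x _ ↦ isClosed_le (by fun_prop) continuous_const

theorem convex_polarBody : Convex ℝ (polarBody M) := by
  rw [polarBody_eq_biInter]
  exact convex_iInter₂ fun x _ ↦ convex_halfSpace_le (innerₗ _ x).isLinear 1

theorem zero_mem_interior_polarBody (hM : Bornology.IsBounded M) :
    0 ∈ interior (polarBody M) := by
  obtain ⟨R, hR, hMR⟩ := hM.exists_pos_norm_le
  refine mem_interior_iff_mem_nhds.2 (Filter.mem_of_superset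
    (Metric.closedBall_mem_nhds 0 (inv_pos.2 hR)) fun y hy x hx ↦ ?_)
  calc ⟪x, y⟫ ≤ ‖x‖ * ‖y‖ := real_inner_le_norm x y
    _ ≤ R * R⁻¹ := by
      gcongr
      exacts [hMR x hx, mem_closedBall_zero_iff.1 hy]
    _ = 1 := mul_inv_cancel₀ hR.ne'

theorem isBounded_polarBody (hM : 0 ∈ interior M) : Bornology.IsBounded (polarBody M) := by
  obtain ⟨r, hr, hrM⟩ := Metric.nhds_basis_closedBall.mem_iff.1 (mem_interior_iff_mem_nhds.1 hM)
  refine isBounded_iff_forall_norm_le.2 ⟨r⁻¹, fun y hy ↦ ?_⟩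
  rcases eq_or_ne y 0 with rfl | hy0
  · simpa using hr.le
  have hmem : (r / ‖y‖) • y ∈ M := hrM <| by
    rw [mem_closedBall_zero_iff, norm_smul, norm_div, norm_norm,
      div_mul_cancel₀ _ (norm_ne_zero_iff.2 hy0), Real.norm_of_nonneg hr.le]
  have hle : r * ‖y‖ ≤ 1 := by
    have := hy _ hmem
    rw [real_inner_smul_left, real_inner_self_eq_norm_sq] at this
    field_simp at this
    exact this
  rwa [← one_div, le_div_iff₀' hr]

theorem isCompact_polarBody_s2 (hM : 0 ∈ interior M) : IsCompact (polarBody M) :=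
  Metric.isCompact_of_isClosed_isBounded isClosed_polarBody_s2 (isBounded_polarBody hM)

theorem polarBody_polarBody (hconv : Convex ℝ M) (hclosed : IsClosed M) (h0 : 0 ∈ M) :
    polarBody (polarBody M) = M := by
  refine Set.Subset.antisymm (fun x hx ↦ ?_) fun x hx y hy ↦ ?_
  · by_contra hxM
    obtain ⟨f, u, hfM, hfx⟩ := geometric_hahn_banach_closed_point hconv hclosed hxM
    have hu : 0 < u := by simpa using hfM 0 h0
    obtain ⟨w, rfl⟩ := (InnerProductSpace.toDual ℝ _).surjective f
    simp only [InnerProductSpace.toDual_apply_apply] at hfM hfx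
    have hw : u⁻¹ • w ∈ polarBody M := fun z hz ↦ by
      rw [inner_smul_right, real_inner_comm, inv_mul_le_one₀ hu]
      exact (hfM z hz).le
    have hle := hx _ hw
    rw [real_inner_smul_left, inv_mul_le_one₀ hu] at hle
    exact hle.not_gt hfx
  · rw [real_inner_comm]
    exact hy x hx

theorem inner_lt_one_of_mem_interior {x y : EuclideanSpace ℝ (Fin n)} (hx : x ∈ interior M)
    (hy : y ∈ polarBody M) : ⟪x, y⟫ < 1 := by
  have hpath : Filter.Tendsto (fun t : ℝ ↦ x + t • y) (𝓝[>] 0) (𝓝 x) := by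
    refine tendsto_nhdsWithin_of_tendsto_nhds ?_
    have : Continuous fun t : ℝ ↦ x + t • y := by fun_prop
    simpa using this.tendsto 0
  obtain ⟨t, htM, ht : 0 < t⟩ :=
    ((hpath.eventually (mem_interior_iff_mem_nhds.1 hx)).and self_mem_nhdsWithin).exists
  have hle : ⟪x, y⟫ + t * ‖y‖ ^ 2 ≤ 1 := by
    simpa [inner_add_left, real_inner_smul_left] using hy _ htM
  rcases eq_or_ne y 0 with rfl | hy0
  · simp
  · have : 0 < t * ‖y‖ ^ 2 := by positivity
    linarith

theorem projectiveMap_mem_polarBody {x z : EuclideanSpace ℝ (Fin n)} (hz : z ∈ polarBody M)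
    (hpos : 0 < 1 + ⟪x, z⟫) :
    projectiveMap (innerSL ℝ x) z ∈ polarBody ((fun y ↦ y + x) '' M) := by
  rintro _ ⟨m, hm, rfl⟩
  have := hz m hm
  rw [projectiveMap, innerSL_apply_apply, inner_smul_right, inner_add_left, inv_mul_le_one₀ hpos]
  linarith

theorem polarBody_image_add_right_s2 (hM : 0 ∈ interior M) {x : EuclideanSpace ℝ (Fin n)}
    (hpos : ∀ z ∈ polarBody M, 0 < 1 + ⟪x, z⟫) :
    polarBody ((fun y ↦ y + x) '' M) = projectiveMap (innerSL ℝ x) '' polarBody M := by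
  refine Set.Subset.antisymm (fun y hy ↦ ?_)
    (Set.image_subset_iff.2 fun z hz ↦ projectiveMap_mem_polarBody hz (hpos z hz))
  have hx : x ∈ interior ((fun y ↦ y + x) '' M) := by
    have := (isOpenMap_add_right x).image_interior_subset M (Set.mem_image_of_mem _ hM)
    rwa [zero_add] at this
  have hpos' : 0 < 1 + ⟪-x, y⟫ := by
    rw [inner_neg_left]
    linarith [inner_lt_one_of_mem_interior hx hy]
  refine ⟨projectiveMap (innerSL ℝ (-x)) y, ?_, ?_⟩
  · have := projectiveMap_mem_polarBody hy hpos'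
    rwa [Set.image_image, Set.image_congr fun m _ ↦ add_neg_cancel_right m x,
      Set.image_id'] at this
  · simpa using projectiveMap_neg_projectiveMap (f := innerSL ℝ (-x)) hpos'.ne'

theorem volume_polarBody_image_add_polarBody (hcomp : IsCompact M) (hconv : Convex ℝ M)
    (h0 : 0 ∈ M) {x : EuclideanSpace ℝ (Fin n)} (hpos : ∀ z ∈ M, 0 < 1 + ⟪x, z⟫) :
    (volume (polarBody ((fun y ↦ y + x) '' polarBody M))).toReal =
      ∫ z in M, ((1 + ⟪x, z⟫) ^ (n + 1))⁻¹ := by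
  have hbipolar : polarBody (polarBody M) = M := polarBody_polarBody hconv hcomp.isClosed h0
  rw [polarBody_image_add_right_s2 (zero_mem_interior_polarBody hcomp.isBounded)
    (by rwa [hbipolar]), hbipolar]
  simpa [Measure.real] using
    measureReal_image_projectiveMap volume hcomp.measurableSet (f := innerSL ℝ x) hpos

end PolarBody

section VolumeProduct

variable {n : ℕ} {K : Set (EuclideanSpace ℝ (Fin n))}

theorem FK_eq_setIntegral_mul_setIntegral (hcomp : IsCompact K) (hconv : Convex ℝ K)
    (h0 : 0 ∈ interior K) {x ξ : EuclideanSpace ℝ (Fin n)} (hξ : ∀ z ∈ K, 0 < 1 + ⟪ξ, z⟫)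
    (hx : ∀ z ∈ polarBody K, 0 < 1 + ⟪x, z + ξ⟫) :
    FK K (x, ξ) = (∫ z in K, ((1 + ⟪ξ, z⟫) ^ (n + 1))⁻¹) *
      ∫ z in polarBody K, ((1 + ⟪x, z + ξ⟫) ^ (n + 1))⁻¹ := by
  set L := (fun y ↦ y + ξ) '' polarBody K with hL
  have hLcomp : IsCompact L := (isCompact_polarBody_s2 h0).image (continuous_add_const ξ)
  have hLconv : Convex ℝ L := by
    simpa only [hL, add_comm _ ξ] using convex_polarBody.translate ξ
  have hL0 : 0 ∈ L := by
    refine ⟨-ξ, fun z hz ↦ ?_, neg_add_cancel ξ⟩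
    rw [inner_neg_right, real_inner_comm]
    linarith [hξ z hz]
  have hvolume : volume ((fun y ↦ y + x) '' polarBody L) = volume (polarBody L) := by
    rw [Set.image_add_right, measure_preimage_add_right]
  have hshift : ∫ z in L, ((1 + ⟪x, z⟫) ^ (n + 1))⁻¹ =
      ∫ z in polarBody K, ((1 + ⟪x, z + ξ⟫) ^ (n + 1))⁻¹ :=
    (measurePreserving_add_right volume ξ).setIntegral_image_emb
      (measurableEmbedding_addRight ξ) _ _
  rw [FK, vp, hvolume, volume_polarBody_image_add_polarBody hcomp hconv (interior_subset h0) hξ,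
    volume_polarBody_image_add_polarBody hLcomp hLconv hL0 (Set.forall_mem_image.2 hx), hshift]

theorem eventually_FK_eq_setIntegral_mul_setIntegral (hcomp : IsCompact K) (hconv : Convex ℝ K)
    (h0 : 0 ∈ interior K) :
    ∀ᶠ p in 𝓝 (0, 0), FK K p = (∫ z in K, ((1 + ⟪p.2, z⟫) ^ (n + 1))⁻¹) *
      ∫ z in polarBody K, ((1 + ⟪p.1, z + p.2⟫) ^ (n + 1))⁻¹ := by
  have hξ : ∀ᶠ p : EuclideanSpace ℝ (Fin n) × EuclideanSpace ℝ (Fin n) in 𝓝 (0, 0),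
      ∀ z ∈ K, 0 < 1 + ⟪p.2, z⟫ := by
    refine hcomp.eventually_forall_of_forall_eventually fun z _ ↦ ?_
    exact Filter.Tendsto.eventually_const_lt (v := 1) one_pos
      (Continuous.tendsto' (by fun_prop) _ _ (by simp))
  have hx : ∀ᶠ p : EuclideanSpace ℝ (Fin n) × EuclideanSpace ℝ (Fin n) in 𝓝 (0, 0),
      ∀ z ∈ polarBody K, 0 < 1 + ⟪p.1, z + p.2⟫ := by
    refine (isCompact_polarBody_s2 h0).eventually_forall_of_forall_eventually fun z _ ↦ ?_
    exact Filter.Tendsto.eventually_const_lt (v := 1) one_pos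
      (Continuous.tendsto' (by fun_prop) _ _ (by simp))
  filter_upwards [hξ, hx] with p hpξ hpx
  exact FK_eq_setIntegral_mul_setIntegral hcomp hconv h0 hpξ hpx

theorem volume_toReal_pos_of_isCompact (hcomp : IsCompact K) (h0 : 0 ∈ interior K) :
    0 < (volume K).toReal :=
  ENNReal.toReal_pos
    (Measure.measure_pos_of_mem_nhds volume (mem_interior_iff_mem_nhds.1 h0)).ne'
    hcomp.measure_ne_top

theorem vp_pos (hcomp : IsCompact K) (h0 : 0 ∈ interior K) : 0 < vp K :=
  mul_pos (volume_toReal_pos_of_isCompact hcomp h0) <|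
    volume_toReal_pos_of_isCompact (isCompact_polarBody_s2 h0)
      (zero_mem_interior_polarBody hcomp.isBounded)

theorem setIntegral_eq_volume_smul_bary (hcomp : IsCompact K) (h0 : 0 ∈ interior K) :
    ∫ z in K, z = (volume K).toReal • bary K := by
  rw [bary, smul_inv_smul₀ (volume_toReal_pos_of_isCompact hcomp h0).ne']

theorem hasDerivAt_inv_one_add_pow_zero (m : ℕ) :
    HasDerivAt (fun t : ℝ ↦ ((1 + t) ^ m)⁻¹) (-m) 0 := by
  have hpow : HasDerivAt (fun t : ℝ ↦ (1 + t) ^ m) m 0 := by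
    simpa using ((hasDerivAt_id (0 : ℝ)).const_add 1).fun_pow m
  simpa using hpow.fun_inv (by simp)

theorem hasFDerivAt_FK (hcomp : IsCompact K) (hconv : Convex ℝ K) (h0 : 0 ∈ interior K) :
    HasFDerivAt (FK K)
      (-((n + 1) * vp K) • (innerSL ℝ (bary (polarBody K))).coprod (innerSL ℝ (bary K)))
      (0, 0) := by
  have hφ : ContDiffAt ℝ 1 (fun t : ℝ ↦ ((1 + t) ^ (n + 1))⁻¹) 0 :=
    ContDiffAt.inv (by fun_prop) (by simp)
  have hbody := (hasFDerivAt_setIntegral_comp_inner_add (μ := volume) hcomp hφ).comp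
    (f := fun p : EuclideanSpace ℝ (Fin n) × EuclideanSpace ℝ (Fin n) ↦ (p.2, 0)) (0, 0)
    (hasFDerivAt_snd.prodMk (hasFDerivAt_const 0 (0, 0)))
  have hpolar := hasFDerivAt_setIntegral_comp_inner_add (μ := volume) (isCompact_polarBody_s2 h0) hφ
  simp only [(hasDerivAt_inv_one_add_pow_zero (n + 1)).deriv,
    setIntegral_eq_volume_smul_bary hcomp h0,
    setIntegral_eq_volume_smul_bary (isCompact_polarBody_s2 h0)
      (zero_mem_interior_polarBody hcomp.isBounded)] at hbody hpolar
  have hFK : FK K =ᶠ[𝓝 (0, 0)] _ := eventually_FK_eq_setIntegral_mul_setIntegral hcomp hconv h0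
  refine HasFDerivAt.congr_fderiv (HasFDerivAt.congr_of_eventuallyEq
    (by simpa [Function.comp_def] using hbody.fun_mul hpolar) hFK) ?_
  ext <;> simp [vp, Measure.real] <;> ring

end VolumeProduct

theorem stmt2 {n : ℕ} (hn : 1 ≤ n) (K : Set (EuclideanSpace ℝ (Fin n)))
    (hKcomp : IsCompact K) (hKconv : Convex ℝ K)
    (hK0 : (0 : EuclideanSpace ℝ (Fin n)) ∈ interior K) :
    fderiv ℝ (FK K) (0, 0) = 0 ↔
      (bary K = 0 ∧ bary (polarBody K) = 0) := by
  have hcoeff : -((n + 1) * vp K) ≠ 0 :=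
    neg_ne_zero.2 (mul_pos n.cast_add_one_pos (vp_pos hKcomp hK0)).ne'
  rw [(hasFDerivAt_FK hKcomp hKconv hK0).fderiv, smul_eq_zero_iff_right hcoeff,
    coprod_innerSL_eq_zero_iff, and_comm]
end
end

section
/- Let n ≥ 1, let K ⊂ ℝⁿ be a convex body containing the origin in its interior, and let ξ ∈ ℝⁿ be such that −ξ lies in the interior of K°. Then 1 + ⟨ξ, y⟩ > 0 for every y ∈ K, and the image of K under the map y ↦ y / (1 + ⟨ξ, y⟩) equals the convex body (K° + ξ)°. -/
open MeasureTheory RealInnerProductSpace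

noncomputable section

/-!
Translating `K°` by `ξ` turns the constraint `⟪z, w⟫ ≤ 1` into `⟪z, w⟫ ≤ 1 - ⟪ξ, w⟫` for `z ∈ K°`.
If `1 - ⟪ξ, w⟫ > 0`, this says `w / (1 - ⟪ξ, w⟫) ∈ K°° = K`, and `w ↦ w / (1 - ⟪ξ, w⟫)` is the
inverse of `y ↦ y / (1 + ⟪ξ, y⟫)`. If `1 - ⟪ξ, w⟫ ≤ 0`, the whole ray spanned by `w` lies in
`K°° = K`, so `w = 0` by boundedness, which is absurd because `1 - ⟪ξ, 0⟫ = 1`.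
-/

open Bornology Filter Topology

section Polar

variable {E : Type*} [NormedAddCommGroup E] [InnerProductSpace ℝ E] {K L : Set E} {ξ w y : E}

/-- The one-sided polar `{y | ⟪x, y⟫ ≤ 1 for all x ∈ K}` of a subset of a real inner product
space; `polarBody` is, definitionally, the case of `EuclideanSpace ℝ (Fin n)`. -/
def innerPolar (K : Set E) : Set E :=
  {y | ∀ x ∈ K, ⟪x, y⟫ ≤ 1}

/-- The projective map `y ↦ y / (1 + ⟪ξ, y⟫)`, by which a body changes when its polar is
translated by `ξ`. On the hyperplane `⟪ξ, y⟫ = -1` it takes the junk value `0`. -/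
def polarShift (ξ y : E) : E :=
  (1 + ⟪ξ, y⟫)⁻¹ • y

theorem inv_smul_mem_innerPolar_iff {c : ℝ} (hc : 0 < c) :
    c⁻¹ • w ∈ innerPolar L ↔ ∀ z ∈ L, ⟪z, w⟫ ≤ c := by
  simp only [innerPolar, Set.mem_ofPred_eq, inner_smul_right, inv_mul_le_iff₀ hc, mul_one]

-- The bound `1 - ⟪ξ, w⟫` is written `1 + ⟪-ξ, w⟫` to match the denominator of `polarShift (-ξ)`.
theorem mem_innerPolar_image_add_right_iff :
    w ∈ innerPolar ((fun z ↦ z + ξ) '' L) ↔ ∀ z ∈ L, ⟪z, w⟫ ≤ 1 + ⟪-ξ, w⟫ := by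
  simp only [innerPolar, Set.mem_ofPred_eq, Set.forall_mem_image, inner_add_left, inner_neg_left,
    ← sub_eq_add_neg, le_sub_iff_add_le]

theorem subset_innerPolar_innerPolar : K ⊆ innerPolar (innerPolar K) := fun x hx y hy ↦ by
  simpa only [real_inner_comm] using hy x hx

theorem innerPolar_innerPolar [CompleteSpace E] (hconv : Convex ℝ K) (hclosed : IsClosed K)
    (h0 : 0 ∈ K) : innerPolar (innerPolar K) = K := by
  refine Set.Subset.antisymm (fun y hy ↦ ?_) subset_innerPolar_innerPolar
  by_contra hyK
  obtain ⟨f, u, hfK, huy⟩ := geometric_hahn_banach_closed_point hconv hclosed hyK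
  obtain ⟨v, rfl⟩ := (InnerProductSpace.toDual ℝ E).surjective f
  simp only [InnerProductSpace.toDual_apply_apply] at hfK huy
  have hu : 0 < u := by simpa only [inner_zero_right] using hfK 0 h0
  have hv : u⁻¹ • v ∈ innerPolar K :=
    (inv_smul_mem_innerPolar_iff hu).2 fun x hx ↦ real_inner_comm x v ▸ (hfK x hx).le
  have hvy : ⟪v, y⟫ ≤ u := by
    simpa only [real_inner_smul_left, inv_mul_le_iff₀ hu, mul_one] using hy _ hv
  exact hvy.not_gt huy

theorem eq_zero_of_forall_pos_smul_mem {V : Type*} [NormedAddCommGroup V] [NormedSpace ℝ V]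
    {A : Set V} {v : V} (hbdd : IsBounded A) (hray : ∀ t : ℝ, 0 < t → t • v ∈ A) : v = 0 := by
  by_contra hv
  obtain ⟨M, hM, hnorm⟩ := hbdd.exists_pos_norm_lt
  have hlt : ‖(M / ‖v‖) • v‖ < M := hnorm _ (hray _ (div_pos hM (norm_pos_iff.2 hv)))
  rw [norm_smul, norm_div, norm_norm, div_mul_cancel₀ _ (norm_ne_zero_iff.2 hv)] at hlt
  exact hlt.not_ge (Real.le_norm_self M)

theorem one_add_inner_pos_of_neg_mem_interior_innerPolar (hξ : -ξ ∈ interior (innerPolar K))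
    (hy : y ∈ K) : 0 < 1 + ⟪ξ, y⟫ := by
  -- Since `-ξ` is interior, some dilate `t • -ξ` with `t > 1` still lies in the polar.
  have hcont : Tendsto (fun t : ℝ ↦ t • -ξ) (𝓝[>] 1) (𝓝 (-ξ)) := by
    simpa only [one_smul] using
      (Continuous.tendsto (f := fun t : ℝ ↦ t • -ξ) (by fun_prop) 1).mono_left nhdsWithin_le_nhds
  obtain ⟨t, htξ, (ht : 1 < t)⟩ :=
    ((hcont.eventually_mem (mem_interior_iff_mem_nhds.1 hξ)).and self_mem_nhdsWithin).exists
  have hle : t * -⟪ξ, y⟫ ≤ 1 := by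
    simpa only [inner_smul_right, inner_neg_right, real_inner_comm] using htξ y hy
  by_contra! hneg
  have hge : t ≤ t * -⟪ξ, y⟫ :=
    le_mul_of_one_le_right (zero_le_one.trans ht.le) (by linarith only [hneg])
  exact (hge.trans hle).not_gt ht

theorem one_add_inner_neg_polarShift (hy : 1 + ⟪ξ, y⟫ ≠ 0) :
    1 + ⟪-ξ, polarShift ξ y⟫ = (1 + ⟪ξ, y⟫)⁻¹ := by
  rw [polarShift, inner_neg_left, inner_smul_right]
  field_simp
  ring

theorem polarShift_neg_polarShift (hy : 1 + ⟪ξ, y⟫ ≠ 0) :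
    polarShift (-ξ) (polarShift ξ y) = y := by
  rw [polarShift, one_add_inner_neg_polarShift hy, inv_inv, polarShift, smul_inv_smul₀ hy]

theorem one_add_inner_neg_pos_of_mem_innerPolar_image_add_right [CompleteSpace E]
    (hconv : Convex ℝ K) (hclosed : IsClosed K) (hbdd : IsBounded K) (h0 : 0 ∈ K)
    (hw : w ∈ innerPolar ((fun z ↦ z + ξ) '' innerPolar K)) : 0 < 1 + ⟪-ξ, w⟫ := by
  by_contra! hle
  have hray (t : ℝ) (ht : 0 < t) : t • w ∈ K := by
    rw [← innerPolar_innerPolar hconv hclosed h0, ← inv_inv t,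
      inv_smul_mem_innerPolar_iff (inv_pos.2 ht)]
    exact fun z hz ↦ ((mem_innerPolar_image_add_right_iff.1 hw z hz).trans hle).trans
      (inv_pos.2 ht).le
  have hw0 : w = 0 := eq_zero_of_forall_pos_smul_mem hbdd hray
  norm_num [hw0] at hle

theorem mem_innerPolar_image_add_right_iff_polarShift_mem [CompleteSpace E]
    (hconv : Convex ℝ K) (hclosed : IsClosed K) (h0 : 0 ∈ K) (hw : 0 < 1 + ⟪-ξ, w⟫) :
    w ∈ innerPolar ((fun z ↦ z + ξ) '' innerPolar K) ↔ polarShift (-ξ) w ∈ K := by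
  rw [mem_innerPolar_image_add_right_iff, ← inv_smul_mem_innerPolar_iff hw,
    innerPolar_innerPolar hconv hclosed h0, polarShift]

theorem polarShift_image_eq_innerPolar [CompleteSpace E] (hconv : Convex ℝ K)
    (hclosed : IsClosed K) (hbdd : IsBounded K) (h0 : 0 ∈ K) (hpos : ∀ y ∈ K, 0 < 1 + ⟪ξ, y⟫) :
    polarShift ξ '' K = innerPolar ((fun z ↦ z + ξ) '' innerPolar K) := by
  refine Set.Subset.antisymm ?_ fun w hw ↦ ?_
  · rintro _ ⟨y, hy, rfl⟩
    have hpos' : 0 < 1 + ⟪-ξ, polarShift ξ y⟫ := by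
      rw [one_add_inner_neg_polarShift (hpos y hy).ne']
      exact inv_pos.2 (hpos y hy)
    rwa [mem_innerPolar_image_add_right_iff_polarShift_mem hconv hclosed h0 hpos',
      polarShift_neg_polarShift (hpos y hy).ne']
  · have hw_pos := one_add_inner_neg_pos_of_mem_innerPolar_image_add_right hconv hclosed hbdd h0 hw
    refine ⟨polarShift (-ξ) w,
      (mem_innerPolar_image_add_right_iff_polarShift_mem hconv hclosed h0 hw_pos).1 hw, ?_⟩
    simpa only [neg_neg] using polarShift_neg_polarShift hw_pos.ne'

theorem stmt10_general [CompleteSpace E] (hconv : Convex ℝ K) (hclosed : IsClosed K)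
    (hbdd : IsBounded K) (h0 : 0 ∈ K) (hξ : -ξ ∈ interior (innerPolar K)) :
    (∀ y ∈ K, 0 < 1 + ⟪ξ, y⟫) ∧
    (fun y ↦ (1 + ⟪ξ, y⟫)⁻¹ • y) '' K = innerPolar ((fun z ↦ z + ξ) '' innerPolar K) := by
  have hpos (y : E) (hy : y ∈ K) : 0 < 1 + ⟪ξ, y⟫ :=
    one_add_inner_pos_of_neg_mem_interior_innerPolar hξ hy
  exact ⟨hpos, polarShift_image_eq_innerPolar hconv hclosed hbdd h0 hpos⟩

end Polar

theorem stmt10 {n : ℕ} (hn : 1 ≤ n) (K : Set (EuclideanSpace ℝ (Fin n)))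
    (hKcomp : IsCompact K) (hKconv : Convex ℝ K)
    (hK0 : (0 : EuclideanSpace ℝ (Fin n)) ∈ interior K)
    (ξ : EuclideanSpace ℝ (Fin n)) (hξ : -ξ ∈ interior (polarBody K)) :
    (∀ y ∈ K, 0 < 1 + ⟪ξ, y⟫) ∧
    (fun y => (1 + ⟪ξ, y⟫)⁻¹ • y) '' K = polarBody ((fun z => z + ξ) '' polarBody K) := by
  exact stmt10_general hKconv hKcomp.isClosed hKcomp.isBounded (interior_subset hK0) hξ
end
end
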